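/- Let α ≤ β ≤ −1 be negative integers and let M = (M_i)_{i≥0} be real parameters with M_i ∉ {0,1}. Then for every integer f with ⌈(−α−β)/2⌉ ≤ f ≤ −α−1, P̂_f^{α,β;M}(x) = lim_{s→0} (1/s)·[ P_f^{α−s,β}(x) − (P_f^{α−s,β}(1)/P_{−f−α−β−1}^{α−s,β}(1)) · P_{−f−α−β−1}^{α−s,β}(x) ], the limit existing for every x (here s → 0 through values for which P_{−f−α−β−1}^{α−s,β}(1) ≠ 0). -/

import Mathlib

open Finset MeasureTheory

noncomputable section ExceptionalHahnJacobi

/-- Pochhammer symbol `(z)_m = z (z+1) ⋯ (z+m-1)`. -/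
def poch (z : ℝ) (m : ℕ) : ℝ := ∏ i ∈ Finset.range m, (z + (i : ℝ))

/-- Pochhammer symbol with integer exponent; `(z)_{-k} = 1 / ((z-1)(z-2)⋯(z-k))`. -/
def pochZ (z : ℝ) (m : ℤ) : ℝ :=
  if 0 ≤ m then poch z m.toNat else 1 / poch (z - ((-m).toNat : ℝ)) (-m).toNat

/-- Generalized binomial coefficient `C(z, k) = z(z-1)⋯(z-k+1)/k!`. -/
def genBinom (z : ℝ) (k : ℕ) : ℝ := (∏ i ∈ Finset.range k, (z - (i : ℝ))) / (k.factorial : ℝ)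

/-- `λ^{a,b}(x) = x (x + a + b + 1)`. -/
def lam (a b x : ℝ) : ℝ := x * (x + a + b + 1)

/-- Hahn polynomial `h_n^{a,b,N}(x)`. -/
def hahn (a b N : ℝ) (n : ℕ) (x : ℝ) : ℝ :=
  ∑ j ∈ Finset.range (n + 1),
    poch (-(n : ℝ)) j * poch (a + b + (n : ℝ) + 1) j * poch (-N + (j : ℝ)) (n - j) *
      poch (a + (j : ℝ) + 1) (n - j) * poch (-x) j / (j.factorial : ℝ)

/-- Dual Hahn polynomial `R_n^{a,b,N}(x)`. -/
def dualHahn (a b N : ℝ) (n : ℕ) (x : ℝ) : ℝ :=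
  ∑ j ∈ Finset.range (n + 1),
    poch (-(n : ℝ)) j * poch (-N + (j : ℝ)) (n - j) * poch (a + (j : ℝ) + 1) (n - j) /
        ((n.factorial : ℝ) * (-1 : ℝ) ^ j * (j.factorial : ℝ)) *
      ∏ i ∈ Finset.range j, (x - (i : ℝ) * (a + b + 1 + (i : ℝ)))

/-- Dual Hahn polynomial with integer degree; zero for negative degree. -/
def dualHahnZ (a b N : ℝ) (m : ℤ) (x : ℝ) : ℝ :=
  if 0 ≤ m then dualHahn a b N m.toNat x else 0

/-- Jacobi polynomial `P_n^{a,b}(x)`. -/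
def jacobiP (a b : ℝ) (n : ℕ) (x : ℝ) : ℝ :=
  (2 : ℝ)⁻¹ ^ n * ∑ j ∈ Finset.range (n + 1),
    genBinom ((n : ℝ) + a) j * genBinom ((n : ℝ) + b) (n - j) * (x - 1) ^ (n - j) * (x + 1) ^ j

/-- The function `φ_u^{α,β,N}(s,x)`, a normalized terminating ₃F₂. -/
def phiH (α β : ℤ) (N : ℝ) (u : ℕ) (s x : ℝ) : ℝ :=
  poch ((α : ℝ) + 1) (max u (-α - β - (u : ℤ) - 1).toNat) *
    poch (-N) (max u (-α - β - (u : ℤ) - 1).toNat) *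
    ∑ j ∈ Finset.range (u + 1),
      poch (-(u : ℝ)) j * poch ((u : ℝ) - s + (α : ℝ) + (β : ℝ) + 1) j * poch (-x) j /
        (poch ((α : ℝ) - s + 1) j * poch (-N) j * (j.factorial : ℝ))

/-- The polynomials `Ĥ_n^{α,β,N;M}(x)`. -/
def Hhat (α β : ℤ) (N : ℝ) (M : ℕ → ℝ) (n : ℕ) (x : ℝ) : ℝ :=
  if ⌈((-α - β : ℤ) : ℚ) / 2⌉ ≤ (n : ℤ) ∧ (n : ℤ) ≤ -α - 1 then
    deriv (fun s => phiH α β N n s x) 0 -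
      deriv (fun s => phiH α β N (-α - β - (n : ℤ) - 1).toNat s x) 0
  else if -α ≤ (n : ℤ) ∧ (n : ℤ) ≤ -α - β - 1 then
    (-1 : ℝ) ^ ((β : ℤ) + (n : ℤ)) * ((β + (n : ℤ)).toNat.factorial : ℝ) *
      (((-α - β - (n : ℤ) - 1).toNat.factorial : ℝ) * poch (-x) (-α).toNat *
          hahn (-(α : ℝ)) (β : ℝ) ((α : ℝ) + N) ((α + (n : ℤ)).toNat) (x + (α : ℝ)) +
        (((α + (n : ℤ)).toNat.factorial : ℝ)) *
            poch (-N - (α : ℝ) - (β : ℝ) - (n : ℝ) - 1) (2 * (n : ℤ) + α + β + 1).toNat /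
            (M ((α + (n : ℤ)).toNat) - 1) *
          hahn (α : ℝ) (β : ℝ) N ((-α - β - (n : ℤ) - 1).toNat) x)
  else hahn (α : ℝ) (β : ℝ) N n x

/-- The function `φ_u^{α,β}(s,x)`, a normalized terminating ₂F₁. -/
def phiJ (α β : ℤ) (u : ℕ) (s x : ℝ) : ℝ :=
  poch ((α : ℝ) + 1) (max u (-α - β - (u : ℤ) - 1).toNat) /
      ((max u.factorial (-α - β - (u : ℤ) - 1).toNat.factorial : ℕ) : ℝ) *
    ∑ j ∈ Finset.range (u + 1),
      poch (-(u : ℝ)) j * poch ((u : ℝ) - s + (α : ℝ) + (β : ℝ) + 1) j /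
          (poch ((α : ℝ) - s + 1) j * (j.factorial : ℝ)) * ((1 - x) / 2) ^ j

/-- The polynomials `P̂_n^{α,β;M}(x)`. -/
def Phat (α β : ℤ) (M : ℕ → ℝ) (n : ℕ) (x : ℝ) : ℝ :=
  if ⌈((-α - β : ℤ) : ℚ) / 2⌉ ≤ (n : ℤ) ∧ (n : ℤ) ≤ -α - 1 then
    deriv (fun s => phiJ α β n s x) 0 -
      deriv (fun s => phiJ α β (-α - β - (n : ℤ) - 1).toNat s x) 0
  else if -α ≤ (n : ℤ) ∧ (n : ℤ) ≤ -α - β - 1 then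
    (-1 : ℝ) ^ ((β : ℤ) + (n : ℤ)) *
      ((((n : ℤ) + α).toNat.factorial : ℝ) * (((n : ℤ) + β).toNat.factorial : ℝ) *
        ((-α - β - (n : ℤ) - 1).toNat.factorial : ℝ)) / (n.factorial : ℝ) *
      ((M ((α + (n : ℤ)).toNat) - 1)⁻¹ * jacobiP (α : ℝ) (β : ℝ) ((-α - β - (n : ℤ) - 1).toNat) x +
        ((1 - x) / 2) ^ (-α).toNat * jacobiP (-(α : ℝ)) (β : ℝ) ((α + (n : ℤ)).toNat) x)
  else jacobiP (α : ℝ) (β : ℝ) n x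

/-- `u_F = Σ_{f ∈ F} f - C(n_F + 1, 2)`. -/
def uF (F : Finset ℕ) : ℕ := (∑ f ∈ F, f) - (F.card + 1).choose 2

/-- `n ∈ σ_F = {u_F, u_F + 1, …} \ {u_F + f : f ∈ F}`. -/
def inSigma (F : Finset ℕ) (n : ℕ) : Prop := uF F ≤ n ∧ n - uF F ∉ F

/-- The `i`-th element of `F` in increasing order. -/
def elemOf (F : Finset ℕ) (i : Fin F.card) : ℕ := ((F.orderIsoOfFin rfl i : {x // x ∈ F}) : ℕ)

/-- The `i`-th element of a finite set of integers, in increasing order. -/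
def elemOfZ (S : Finset ℤ) (i : Fin S.card) : ℤ := ((S.orderIsoOfFin rfl i : {x // x ∈ S}) : ℤ)

/-- Exceptional Hahn polynomial `h_n^{α,β,N;M,F}(x)`. -/
def exHahn (α β : ℤ) (N : ℝ) (M : ℕ → ℝ) (F : Finset ℕ) (n : ℕ) (x : ℝ) : ℝ :=
  Matrix.det (Matrix.of fun i j : Fin (F.card + 1) =>
    Fin.cases (Hhat α β N M (n - uF F) (x + ((j : ℕ) : ℝ)))
      (fun k => Hhat α β N M (elemOf F k) (x + ((j : ℕ) : ℝ))) i)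

/-- The polynomial `Ω_{M,F}^{α,β,N}(x)`. -/
def OmegaH (α β : ℤ) (N : ℝ) (M : ℕ → ℝ) (F : Finset ℕ) (x : ℝ) : ℝ :=
  Matrix.det (Matrix.of fun i j : Fin F.card =>
    Hhat α β N M (elemOf F i) (x + ((j : ℕ) : ℝ)))

/-- The polynomial `Λ_{M,F}^{α,β,N}(x)` (columns `j ∈ {1,…,n_F+1}`, `j ≠ n_F`). -/
def LambdaH (α β : ℤ) (N : ℝ) (M : ℕ → ℝ) (F : Finset ℕ) (x : ℝ) : ℝ :=
  Matrix.det (Matrix.of fun i j : Fin F.card =>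
    Hhat α β N M (elemOf F i)
      (x + ((if (j : ℕ) = F.card - 1 then F.card else (j : ℕ) : ℕ) : ℝ)))

/-- Exceptional Jacobi polynomial `P_n^{α,β;M,F}(x)`. -/
def exJacobi (α β : ℤ) (M : ℕ → ℝ) (F : Finset ℕ) (n : ℕ) (x : ℝ) : ℝ :=
  Matrix.det (Matrix.of fun i j : Fin (F.card + 1) =>
    Fin.cases (iteratedDeriv (j : ℕ) (Phat α β M (n - uF F)) x)
      (fun k => iteratedDeriv (j : ℕ) (Phat α β M (elemOf F k)) x) i)

/-- The polynomial `Ω_{M,F}^{α,β}(x)`. -/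
def OmegaJ (α β : ℤ) (M : ℕ → ℝ) (F : Finset ℕ) (x : ℝ) : ℝ :=
  Matrix.det (Matrix.of fun i j : Fin F.card =>
    iteratedDeriv (j : ℕ) (Phat α β M (elemOf F i)) x)

/-- `F_ext = F \ {-β, …, -α-β-1}`. -/
def Fext (α β : ℤ) (F : Finset ℕ) : Finset ℕ :=
  F.filter fun f : ℕ => ((f : ℤ) < -β ∨ -α - β ≤ (f : ℤ))

/-- Admissibility of the data `α, β, M, F`. -/
def IsAdmissible (α β : ℤ) (M : ℕ → ℝ) (F : Finset ℕ) : Prop :=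
  (∀ i : ℕ, (i : ℤ) ≤ -β - 1 → (∀ f ∈ F, (i : ℤ) ≠ -β - (f : ℤ) - 1) →
      Real.sign (M i) =
        Real.sign (∏ f ∈ Fext α β F, (((i : ℝ) - (f : ℝ) - (α : ℝ)) * ((i : ℝ) + (f : ℝ) + (β : ℝ) + 1)))) ∧
  (∀ x : ℤ, 0 ≤ x → (∃ f ∈ F, x ≤ (f : ℤ) + α + β) →
      0 ≤ ∏ f ∈ F.filter (fun f : ℕ => -α - β ≤ (f : ℤ)), (x - (f : ℤ) - α - β))

/-- `U_{F-} = {f + α + β : f ∈ F, 1 ≤ f ≤ -β-1}`. -/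
def UFm (α β : ℤ) (F : Finset ℕ) : Finset ℤ :=
  (F.filter fun f : ℕ => (1 ≤ f ∧ (f : ℤ) ≤ -β - 1)).image fun f : ℕ => (f : ℤ) + α + β

/-- `U_{F+} = {f + α + β : f ∈ F, f ≥ -α-β}`. -/
def UFp (α β : ℤ) (F : Finset ℕ) : Finset ℤ :=
  (F.filter fun f : ℕ => -α - β ≤ (f : ℤ)).image fun f : ℕ => (f : ℤ) + α + β

/-- `U_F = U_{F-} ∪ U_{F+}`. -/
def UF (α β : ℤ) (F : Finset ℕ) : Finset ℤ := UFm α β F ∪ UFp α β F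

/-- The weight of the measure `ω_{α,β,N}^{M,F}` at the point `x`. -/
def wH (α β : ℤ) (N : ℕ) (M : ℕ → ℝ) (F : Finset ℕ) (x : ℕ) : ℝ :=
  genBinom ((α : ℝ) + (F.card : ℝ) + (x : ℝ)) x *
      genBinom ((β : ℝ) + (N : ℝ) - (x : ℝ)) (N - F.card - x) /
    (OmegaH α β (N : ℝ) M F (x : ℝ) * OmegaH α β (N : ℝ) M F ((x : ℝ) + 1))

/-- The weight `ω_{α,β;M,F}(x)` on `[-1,1]`. -/
def wJ (α β : ℤ) (M : ℕ → ℝ) (F : Finset ℕ) (x : ℝ) : ℝ :=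
  (1 - x) ^ (α + (F.card : ℤ)) * (1 + x) ^ (β + (F.card : ℤ)) / (OmegaJ α β M F x) ^ 2

/-- The measure on `[-1,1]` with density `ω_{α,β;M,F}`. -/
def jacobiMeasure (α β : ℤ) (M : ℕ → ℝ) (F : Finset ℕ) : Measure ℝ :=
  (volume.restrict (Set.Icc (-1 : ℝ) 1)).withDensity fun x => ENNReal.ofReal (wJ α β M F x)

/-- Mass of the dual Hahn measure `ρ_{b,a,N̂}` at `λ^{a,b}(x)`. -/
def rhoMass (a b Nh : ℤ) (x : ℕ) : ℝ :=
  (2 * (x : ℝ) + (a : ℝ) + (b : ℝ) + 1) * poch ((b : ℝ) + 1) x * poch (-(Nh : ℝ)) x *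
      (Nh.toNat.factorial : ℝ) /
    ((-1 : ℝ) ^ x * poch ((x : ℝ) + (a : ℝ) + (b : ℝ) + 1) (Nh + 1).toNat *
      poch ((a : ℝ) + 1) x * (x.factorial : ℝ))

/-- Mass of the measure `ν_{a,b,N̂}^{M}` at `λ^{a,b}(s)`. -/
def nuMass (a b Nh : ℤ) (M : ℕ → ℝ) (s : ℤ) : ℝ :=
  if -b ≤ s ∧ s ≤ -1 then
    (2 * (s : ℝ) + (a : ℝ) + (b : ℝ) + 1) * poch ((Nh : ℝ) + 1 - (s : ℝ)) (s + b).toNat /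
        poch ((Nh : ℝ) + (b : ℝ) + 1) (s + a + 1).toNat * M ((s + b).toNat)
  else if 0 ≤ s ∧ s ≤ Nh then
    poch ((Nh : ℝ) + 1) b.toNat ^ 2 / poch ((b : ℝ) + 1) (a - b).toNat * rhoMass a b Nh s.toNat /
      ∏ i ∈ Finset.range b.toNat, (((s : ℝ) + (a : ℝ) + (i : ℝ) + 1) * ((s : ℝ) + (b : ℝ) - (i : ℝ)))
  else 0

/-- `ζ_v` (defined for any integer `v` via `pochZ`). -/
def zetaH (α β : ℤ) (N : ℝ) (v : ℤ) : ℝ :=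
  pochZ (-N - (α : ℝ) - (β : ℝ)) v * poch ((v : ℝ) + 1) (-α).toNat *
    ((v - α - β).toNat.factorial : ℝ)

/-- `θ_v^M`. -/
def thetaM (β : ℤ) (M : ℕ → ℝ) (v : ℕ) : ℝ :=
  if (v : ℤ) ≤ -β - 1 then 1 - M ((-β - 1 - (v : ℤ)).toNat) else 1

/-- `τ_v = ∏_{u ∈ U_F} (λ^{a,b}(v+α+β) - λ^{a,b}(u))` with `a = -α`, `b = -β`. -/
def tauH (α β : ℤ) (F : Finset ℕ) (v : ℕ) : ℝ :=
  ∏ u ∈ UF α β F,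
    (lam ((-α : ℤ) : ℝ) ((-β : ℤ) : ℝ) ((v : ℝ) + (α : ℝ) + (β : ℝ)) -
      lam ((-α : ℤ) : ℝ) ((-β : ℤ) : ℝ) ((u : ℤ) : ℝ))

/-- `ξ_n`. -/
def xiH (α β : ℤ) (N : ℝ) (F : Finset ℕ) (n : ℕ) : ℝ :=
  pochZ (N - (n : ℝ) + 1) ((n : ℤ) + α + β) ^ (α + (F.card : ℤ) + 1) *
    ∏ j ∈ Finset.range (F.card + 1), poch (N - (n : ℝ) - (j : ℝ) + 1) j

/-- `κ_M`. -/
def kappaM (α β : ℤ) (N : ℝ) (M : ℕ → ℝ) (F : Finset ℕ) : ℝ :=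
  (∏ u ∈ UFm α β F, (1 - M ((-u + α - 1).toNat))) * ∏ u ∈ UF α β F, zetaH α β N u

/-- Entry `(i,j)` (0-based) of the determinant defining `q_n^{a,b,N̂;M,U_F}`. -/
def qEntry (α β : ℤ) (N : ℝ) (M : ℕ → ℝ) (F : Finset ℕ) (n : ℕ) (x : ℝ) (i j : ℕ) : ℝ :=
  if i = 0 then
    (-1 : ℝ) ^ j * dualHahnZ (((-α).toNat : ℝ)) (((-β).toNat : ℝ)) (N + (α : ℝ) + (β : ℝ))
      ((n : ℤ) - (-α).toNat + j) x
  else if h1 : i - 1 < (UFm α β F).card then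
    (-1 : ℝ) ^ j * dualHahnZ (((-α).toNat : ℝ)) (((-β).toNat : ℝ)) (N + (α : ℝ) + (β : ℝ))
      ((n : ℤ) - (-α).toNat + j)
      (lam (((-α).toNat : ℝ)) (((-β).toNat : ℝ)) ((elemOfZ (UFm α β F) ⟨i - 1, h1⟩ : ℤ) : ℝ))
  else if i - 1 - (UFm α β F).card < (-α).toNat then
    poch (((-α).toNat : ℝ) + ((-β).toNat : ℝ) + (N + (α : ℝ) + (β : ℝ)) - (n : ℝ) - (j : ℝ) + 1) j *
      Hhat α β (-2 - (N + (α : ℝ) + (β : ℝ))) M ((-β).toNat + (i - 1 - (UFm α β F).card))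
        (-(n : ℝ) + ((-α).toNat : ℝ) - (j : ℝ) - 1)
  else if h3 : i - 1 - (UFm α β F).card - (-α).toNat < (UFp α β F).card then
    (-1 : ℝ) ^ j * dualHahnZ (((-α).toNat : ℝ)) (((-β).toNat : ℝ)) (N + (α : ℝ) + (β : ℝ))
      ((n : ℤ) - (-α).toNat + j)
      (lam (((-α).toNat : ℝ)) (((-β).toNat : ℝ))
        ((elemOfZ (UFp α β F) ⟨i - 1 - (UFm α β F).card - (-α).toNat, h3⟩ : ℤ) : ℝ))
  else 0

/-- The Krall dual Hahn orthogonal polynomial `q_n^{a,b,N̂;M,U_F}(x)`. -/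
def qKrall (α β : ℤ) (N : ℝ) (M : ℕ → ℝ) (F : Finset ℕ) (n : ℕ) (x : ℝ) : ℝ :=
  Matrix.det (Matrix.of fun i j : Fin (1 + (UFm α β F).card + (-α).toNat + (UFp α β F).card) =>
      qEntry α β N M F n x (i : ℕ) (j : ℕ)) /
    ((-1 : ℝ) ^ ((n + (-α).toNat + (-β).toNat) * ((UF α β F).card + 1) +
        ((-α).toNat + (-β).toNat).choose 2 + ((-β).toNat).choose 2 + (-α).toNat) *
      ∏ u ∈ UF α β F, (x - lam (((-α).toNat : ℝ)) (((-β).toNat : ℝ)) ((u : ℤ) : ℝ)))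

/-- Row used in the renormalized determinant `P̄`: for `-α ≤ g ≤ -α-β-1` it is
`(M_{α+g} - 1) · P̂_g` written without the division by `M_{α+g} - 1`. -/
def PhatBarRow (α β : ℤ) (M : ℕ → ℝ) (g : ℕ) (x : ℝ) : ℝ :=
  if -α ≤ (g : ℤ) ∧ (g : ℤ) ≤ -α - β - 1 then
    (-1 : ℝ) ^ ((β : ℤ) + (g : ℤ)) *
      ((((g : ℤ) + α).toNat.factorial : ℝ) * (((g : ℤ) + β).toNat.factorial : ℝ) *
        ((-α - β - (g : ℤ) - 1).toNat.factorial : ℝ)) / (g.factorial : ℝ) *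
      (jacobiP (α : ℝ) (β : ℝ) ((-α - β - (g : ℤ) - 1).toNat) x +
        (M ((α + (g : ℤ)).toNat) - 1) * ((1 - x) / 2) ^ (-α).toNat *
          jacobiP (-(α : ℝ)) (β : ℝ) ((α + (g : ℤ)).toNat) x)
  else Phat α β M g x

/-- The renormalized exceptional Jacobi polynomial
`P̄_n^{α,β;M,F} = (∏_{i=0}^{-β-1} (M_i - 1)) · P_n^{α,β;M,F}`
(written so that the factors `M_i - 1` are distributed into the corresponding rows of the
determinant; this agrees with the product formula whenever all `M_i ≠ 1`). -/
def Pbar (α β : ℤ) (M : ℕ → ℝ) (F : Finset ℕ) (n : ℕ) (x : ℝ) : ℝ :=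
  (∏ i ∈ (Finset.range (-β).toNat).filter
      (fun i : ℕ => (((i : ℤ) - α).toNat ∉ F ∧ ((i : ℤ) - α).toNat ≠ n - uF F)), (M i - 1)) *
    Matrix.det (Matrix.of fun r j : Fin (F.card + 1) =>
      Fin.cases (iteratedDeriv (j : ℕ) (PhatBarRow α β M (n - uF F)) x)
        (fun k => iteratedDeriv (j : ℕ) (PhatBarRow α β M (elemOf F k)) x) r)

end ExceptionalHahnJacobi

/-!
Where `P_n^{a,b}(1) ≠ 0` we have `P_n^{a,b}(x) = P_n^{a,b}(1) · F_n^{a,b}(x)` with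
`F_n^{a,b}(x) = ₂F₁(-n, n+a+b+1; a+1; (1-x)/2)`, so for `g = -α-β-1-f` the bracket in the limit is
`P_f^{α-s,β}(1) · (F_f^{α-s,β}(x) - F_g^{α-s,β}(x))`. At `s = 0` the numerator parameters of the two
hypergeometric functions are `-f, -g` and `-g, -f`, so by symmetry the difference vanishes there and
the limit is `P_f^{α,β}(1)` times the difference of the `s`-derivatives of `F_f` and `F_g`.
Since `φ_f` and `φ_g` are both normalized by `P_f^{α,β}(1)`, this is `P̂_f`.
-/

section Pochhammer

lemma poch_eq_ascPochhammer_eval (z : ℝ) (m : ℕ) : poch z m = (ascPochhammer ℝ m).eval z := by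
  induction m with
  | zero => simp [poch]
  | succ m ih => rw [ascPochhammer_succ_eval, ← ih, poch, poch, Finset.prod_range_succ]

lemma poch_add (z : ℝ) (p q : ℕ) : poch z (p + q) = poch z p * poch (z + p) q := by
  simp [poch_eq_ascPochhammer_eval, ← ascPochhammer_mul]

lemma poch_neg_natCast {n k : ℕ} (hkn : k ≤ n) :
    poch (-(n : ℝ)) k = (-1) ^ k * (n.factorial / (n - k).factorial) := by
  rw [poch_eq_ascPochhammer_eval, ascPochhammer_eval_neg_eq_descPochhammer,
    descPochhammer_eval_eq_descFactorial, ← Nat.factorial_mul_descFactorial hkn, Nat.cast_mul,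
    mul_div_cancel_left₀ _ (by positivity)]

lemma poch_ne_zero_of_le {z : ℝ} {j n : ℕ} (hn : poch z n ≠ 0) (hjn : j ≤ n) : poch z j ≠ 0 := by
  rw [← Nat.add_sub_cancel' hjn, poch_add] at hn
  exact left_ne_zero_of_mul hn

lemma differentiable_poch (m : ℕ) : Differentiable ℝ fun z => poch z m := by
  simpa only [poch_eq_ascPochhammer_eval] using (ascPochhammer ℝ m).differentiable

end Pochhammer

section GeneralizedBinomial

lemma genBinom_eq_choose (z : ℝ) (k : ℕ) : genBinom z k = Ring.choose z k := by
  have smeval_eq_prod : (descPochhammer ℤ k).smeval z = ∏ i ∈ Finset.range k, (z - i) := by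
    rw [← Polynomial.aeval_eq_smeval, Polynomial.aeval_def, Polynomial.eval₂_eq_eval_map,
      descPochhammer_map, descPochhammer_eval_eq_prod_range]
  rw [Ring.choose_eq_smul, smeval_eq_prod, genBinom, smul_eq_mul, div_eq_inv_mul]

lemma genBinom_eq_poch_div_factorial (z : ℝ) (k : ℕ) :
    genBinom z k = poch (z - k + 1) k / k.factorial := by
  rw [genBinom, ← descPochhammer_eval_eq_prod_range, descPochhammer_eval_eq_ascPochhammer,
    poch_eq_ascPochhammer_eval]

lemma sum_range_genBinom_mul_genBinom (a b : ℝ) (k : ℕ) :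
    ∑ i ∈ Finset.range (k + 1), genBinom a i * genBinom b (k - i) = genBinom (a + b) k := by
  simp only [genBinom_eq_choose]
  rw [Ring.add_choose_eq k (Commute.all a b), Finset.Nat.sum_antidiagonal_eq_sum_range_succ_mk]

lemma genBinom_mul_add_one_pow (z t : ℝ) (m : ℕ) :
    genBinom z m * (t + 1) ^ m =
      ∑ l ∈ Finset.range (m + 1), genBinom z (m - l) * genBinom (z - (m - l : ℕ)) l * t ^ l := by
  rw [add_pow, Finset.mul_sum]
  refine Finset.sum_congr rfl fun l hl => ?_
  have hlm : l ≤ m := Finset.mem_range_succ_iff.mp hl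
  have choose_mul : (m.choose l : ℝ) * genBinom z m =
      genBinom z (m - l) * genBinom (z - (m - l : ℕ)) l := by
    have := Ring.choose_smul_choose z (Nat.sub_le m l)
    rwa [Nat.choose_symm hlm, Nat.sub_sub_self hlm, nsmul_eq_mul, ← genBinom_eq_choose,
      ← genBinom_eq_choose, ← genBinom_eq_choose] at this
  rw [← choose_mul, one_pow]
  ring

end GeneralizedBinomial

section TerminatingHypergeometric

lemma ordinaryHypergeometric_neg_natCast_eq_sum (n : ℕ) (b c y : ℝ) :
    ₂F₁ (-(n : ℝ)) b c y = ∑ j ∈ Finset.range (n + 1),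
      poch (-(n : ℝ)) j * poch b j / (poch c j * j.factorial) * y ^ j := by
  rw [ordinaryHypergeometric, ordinaryHypergeometric_sum_eq,
    tsum_eq_sum (s := Finset.range (n + 1))]
  · refine Finset.sum_congr rfl fun j _ => ?_
    simp only [← poch_eq_ascPochhammer_eval, smul_eq_mul]
    ring
  · intro j hj
    rw [ascPochhammer_eval_neg_coe_nat_of_lt (by simpa using hj)]
    simp

lemma ordinaryHypergeometric_swap (a b c y : ℝ) : ₂F₁ a b c y = ₂F₁ b a c y := by
  rw [ordinaryHypergeometric, ordinaryHypergeometricSeries_symm, ordinaryHypergeometric]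

lemma differentiableAt_ordinaryHypergeometric_neg_natCast {b c : ℝ → ℝ} {s : ℝ} {n : ℕ}
    (hb : DifferentiableAt ℝ b s) (hc : DifferentiableAt ℝ c s) (hcn : poch (c s) n ≠ 0) (y : ℝ) :
    DifferentiableAt ℝ (fun t => ₂F₁ (-(n : ℝ)) (b t) (c t) y) s := by
  simp only [ordinaryHypergeometric_neg_natCast_eq_sum]
  refine DifferentiableAt.fun_sum fun j hj => ?_
  have hbj := (differentiable_poch j (b s)).comp s hb
  have hcj := (differentiable_poch j (c s)).comp s hc
  have hcj_ne := poch_ne_zero_of_le hcn (Finset.mem_range_succ_iff.mp hj)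
  exact ((hbj.const_mul _).div (hcj.mul_const _) (by positivity)).mul_const _

end TerminatingHypergeometric

section Jacobi

variable {a b : ℝ} {n : ℕ}

lemma jacobiP_eq_sum_neg_pow_mul_add_one_pow (a b : ℝ) (n : ℕ) (x : ℝ) :
    jacobiP a b n x = ∑ i ∈ Finset.range (n + 1),
      genBinom (n + b) i * (-((1 - x) / 2)) ^ i *
        (genBinom (n + a) (n - i) * (-((1 - x) / 2) + 1) ^ (n - i)) := by
  rw [jacobiP, ← Finset.sum_range_reflect, Finset.mul_sum]
  refine Finset.sum_congr rfl fun i hi => ?_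
  have hin : i ≤ n := Finset.mem_range_succ_iff.mp hi
  have half_pow : (2 : ℝ)⁻¹ ^ n = 2⁻¹ ^ i * 2⁻¹ ^ (n - i) := by
    rw [← pow_add, Nat.add_sub_cancel' hin]
  rw [Nat.add_sub_cancel, Nat.sub_sub_self hin, half_pow,
    show -((1 - x) / 2) = 2⁻¹ * (x - 1) by ring,
    show 2⁻¹ * (x - 1) + 1 = 2⁻¹ * (x + 1) by ring, mul_pow, mul_pow]
  ring

/-- Expand the powers of `(x + 1) / 2` in powers of `(x - 1) / 2`; the coefficient of each power is
then a Chu–Vandermonde sum. -/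
lemma jacobiP_eq_sum_genBinom (a b : ℝ) (n : ℕ) (x : ℝ) :
    jacobiP a b n x = ∑ k ∈ Finset.range (n + 1),
      genBinom (n + a) (n - k) * genBinom (n + a + b + k) k * (-((1 - x) / 2)) ^ k := by
  set t := -((1 - x) / 2)
  calc jacobiP a b n x
    _ = ∑ i ∈ Finset.range (n + 1), ∑ l ∈ Finset.range (n + 1 - i),
          genBinom (n + a) (n - (i + l)) *
            (genBinom (n + b) i * genBinom (n + a - (n - (i + l) : ℕ)) l) * t ^ (i + l) := by
      rw [jacobiP_eq_sum_neg_pow_mul_add_one_pow]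
      refine Finset.sum_congr rfl fun i hi => ?_
      rw [genBinom_mul_add_one_pow, Finset.mul_sum,
        Nat.sub_add_comm (Finset.mem_range_succ_iff.mp hi)]
      refine Finset.sum_congr rfl fun l _ => ?_
      rw [Nat.sub_sub, pow_add]
      ring
    _ = ∑ k ∈ Finset.range (n + 1), ∑ i ∈ Finset.range (k + 1),
          genBinom (n + a) (n - k) *
            (genBinom (n + b) i * genBinom (a + k) (k - i)) * t ^ k := by
      rw [← Finset.sum_range_diag_flip (n + 1) fun i l => genBinom (n + a) (n - (i + l)) *
        (genBinom (n + b) i * genBinom (n + a - (n - (i + l) : ℕ)) l) * t ^ (i + l)]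
      refine Finset.sum_congr rfl fun k hk => Finset.sum_congr rfl fun i hi => ?_
      have hkn : k ≤ n := Finset.mem_range_succ_iff.mp hk
      rw [Nat.add_sub_cancel' (Finset.mem_range_succ_iff.mp hi), Nat.cast_sub hkn,
        show (n : ℝ) + a - (n - k) = a + k by ring]
    _ = _ := by
      refine Finset.sum_congr rfl fun k _ => ?_
      rw [← Finset.sum_mul, ← Finset.mul_sum, sum_range_genBinom_mul_genBinom,
        show (n : ℝ) + b + (a + k) = n + a + b + k by ring]

lemma jacobiP_one (a b : ℝ) (n : ℕ) : jacobiP a b n 1 = poch (a + 1) n / n.factorial := by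
  rw [jacobiP_eq_sum_genBinom, Finset.sum_range_succ', Finset.sum_eq_zero (by simp),
    genBinom_eq_poch_div_factorial]
  simp [genBinom]

lemma jacobiP_one_ne_zero (h : a + n < 0) : jacobiP a b n 1 ≠ 0 := by
  rw [jacobiP_one]
  refine div_ne_zero (Finset.prod_ne_zero_iff.mpr fun i hi => ?_) (by positivity)
  have hin : (i : ℝ) + 1 ≤ n := mod_cast Finset.mem_range.mp hi
  linarith

lemma poch_ne_zero_of_jacobiP_one_ne_zero (h : jacobiP a b n 1 ≠ 0) : poch (a + 1) n ≠ 0 := by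
  rw [jacobiP_one] at h
  exact (div_ne_zero_iff.mp h).1

lemma differentiable_jacobiP_one (b : ℝ) (n : ℕ) : Differentiable ℝ fun a => jacobiP a b n 1 := by
  simp only [jacobiP_one]
  exact ((differentiable_poch n).comp (differentiable_id.add_const 1)).div_const _

end Jacobi

section NormalizedJacobi

variable {a b : ℝ} {n : ℕ}

/-- The Jacobi polynomial `P_n^{a,b}` rescaled to take the value `1` at `x = 1`. Encoding it as the
terminating `₂F₁(-n, n + a + b + 1; a + 1; (1 - x) / 2)` instead of a quotient makes the symmetry
between the degrees `n` and `-a - b - 1 - n` visible; when `P_n^{a,b}(1) = 0` a denominator vanishes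
and the value is junk. -/
noncomputable def normalizedJacobi (a b : ℝ) (n : ℕ) (x : ℝ) : ℝ :=
  ₂F₁ (-(n : ℝ)) (n + a + b + 1) (a + 1) ((1 - x) / 2)

lemma jacobiP_eq_jacobiP_one_mul_normalizedJacobi (h : jacobiP a b n 1 ≠ 0) (x : ℝ) :
    jacobiP a b n x = jacobiP a b n 1 * normalizedJacobi a b n x := by
  rw [normalizedJacobi, ordinaryHypergeometric_neg_natCast_eq_sum, jacobiP_one, Finset.mul_sum,
    jacobiP_eq_sum_genBinom]
  refine Finset.sum_congr rfl fun k hk => ?_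
  obtain ⟨p, rfl⟩ := Nat.exists_eq_add_of_le (Finset.mem_range_succ_iff.mp hk)
  have hk_le : k ≤ k + p := Nat.le_add_right k p
  have poch_ne : poch (a + 1) k ≠ 0 :=
    poch_ne_zero_of_le (poch_ne_zero_of_jacobiP_one_ne_zero h) hk_le
  rw [poch_neg_natCast hk_le, Nat.add_sub_cancel_left, genBinom_eq_poch_div_factorial,
    genBinom_eq_poch_div_factorial, poch_add, neg_pow,
    show ((k + p : ℕ) : ℝ) + a - p + 1 = a + 1 + k by push_cast; ring,
    show ((k + p : ℕ) : ℝ) + a + b + k - k + 1 = (k + p : ℕ) + a + b + 1 by ring]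
  field_simp

lemma normalizedJacobi_eq_of_add_eq {f g : ℕ} (h : (f : ℝ) + g + a + b + 1 = 0) (x : ℝ) :
    normalizedJacobi a b f x = normalizedJacobi a b g x := by
  rw [normalizedJacobi, normalizedJacobi, ordinaryHypergeometric_swap,
    show (f : ℝ) + a + b + 1 = -g by linarith, show (g : ℝ) + a + b + 1 = -f by linarith]

lemma differentiableAt_normalizedJacobi (h : jacobiP a b n 1 ≠ 0) (x : ℝ) :
    DifferentiableAt ℝ (fun a' => normalizedJacobi a' b n x) a :=
  differentiableAt_ordinaryHypergeometric_neg_natCast (b := fun a' => n + a' + b + 1)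
    (c := fun a' => a' + 1) (by fun_prop) (by fun_prop) (poch_ne_zero_of_jacobiP_one_ne_zero h) _

end NormalizedJacobi

section Limit

open Filter Topology

variable {a b : ℝ} {f g : ℕ}

lemma jacobiP_sub_ratio_mul_jacobiP (hf : jacobiP a b f 1 ≠ 0) (hg : jacobiP a b g 1 ≠ 0) (x : ℝ) :
    jacobiP a b f x - jacobiP a b f 1 / jacobiP a b g 1 * jacobiP a b g x =
      jacobiP a b f 1 * (normalizedJacobi a b f x - normalizedJacobi a b g x) := by
  rw [jacobiP_eq_jacobiP_one_mul_normalizedJacobi hf x,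
    jacobiP_eq_jacobiP_one_mul_normalizedJacobi hg x]
  field_simp

theorem tendsto_inv_mul_jacobiP_sub_ratio_mul_jacobiP (hfg : (f : ℝ) + g + a + b + 1 = 0)
    (hf : jacobiP a b f 1 ≠ 0) (hg : jacobiP a b g 1 ≠ 0) (x : ℝ) :
    Tendsto
      (fun s : ℝ => s⁻¹ * (jacobiP (a - s) b f x -
        jacobiP (a - s) b f 1 / jacobiP (a - s) b g 1 * jacobiP (a - s) b g x))
      (𝓝[≠] 0)
      (𝓝 (jacobiP a b f 1 * (deriv (fun s => normalizedJacobi (a - s) b f x) 0 -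
        deriv (fun s => normalizedJacobi (a - s) b g x) 0))) := by
  have hasDerivAt_shift {n : ℕ} (hn : jacobiP a b n 1 ≠ 0) :
      HasDerivAt (fun s => normalizedJacobi (a - s) b n x)
        (deriv (fun s => normalizedJacobi (a - s) b n x) 0) 0 := by
    have := differentiableAt_normalizedJacobi hn x
    rw [← sub_zero a, ← differentiableAt_comp_const_sub] at this
    exact this.hasDerivAt
  have continuous_at_one (n : ℕ) : Continuous fun s => jacobiP (a - s) b n 1 :=
    (differentiable_jacobiP_one b n).continuous.comp (continuous_const.sub continuous_id)
  have eventually_ne {n : ℕ} (hn : jacobiP a b n 1 ≠ 0) :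
      ∀ᶠ s in 𝓝[≠] (0 : ℝ), jacobiP (a - s) b n 1 ≠ 0 :=
    ((continuous_at_one n).continuousAt.eventually_ne (by simpa using hn)).filter_mono
      nhdsWithin_le_nhds
  have tendsto_at_one :
      Tendsto (fun s => jacobiP (a - s) b f 1) (𝓝[≠] 0) (𝓝 (jacobiP a b f 1)) := by
    simpa using ((continuous_at_one f).tendsto 0).mono_left nhdsWithin_le_nhds
  have tendsto_slope :=
    hasDerivAt_iff_tendsto_slope_zero.mp ((hasDerivAt_shift hf).fun_sub (hasDerivAt_shift hg))
  refine (tendsto_at_one.mul tendsto_slope).congr' ?_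
  filter_upwards [eventually_ne hf, eventually_ne hg] with s hsf hsg
  rw [jacobiP_sub_ratio_mul_jacobiP hsf hsg, zero_add, sub_zero,
    normalizedJacobi_eq_of_add_eq hfg, sub_self, sub_zero, smul_eq_mul]
  ring

end Limit

section UpperRange

open Filter Topology

lemma phiJ_eq_jacobiP_one_mul_normalizedJacobi (α β : ℤ) (u : ℕ) (s x : ℝ) :
    phiJ α β u s x = jacobiP α β (max u (-α - β - (u : ℤ) - 1).toNat) 1 *
      normalizedJacobi (α - s) β u x := by
  rw [phiJ, jacobiP_one, normalizedJacobi, ordinaryHypergeometric_neg_natCast_eq_sum,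
    Nat.monotone_factorial.map_max, show (u : ℝ) - s + α + β + 1 = u + (α - s) + β + 1 by ring]

lemma Phat_eq_jacobiP_one_mul_deriv_sub_deriv {α β : ℤ} (M : ℕ → ℝ) {f g : ℕ}
    (hfg : (f : ℤ) + g + α + β + 1 = 0) (hgf : g < f) (hf : (f : ℤ) ≤ -α - 1) (x : ℝ) :
    Phat α β M f x = jacobiP α β f 1 *
      (deriv (fun s => normalizedJacobi (α - s) β f x) 0 -
        deriv (fun s => normalizedJacobi (α - s) β g x) 0) := by
  have ceil_le : ⌈((-α - β : ℤ) : ℚ) / 2⌉ ≤ (f : ℤ) := by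
    rw [Int.ceil_le, div_le_iff₀ two_pos]
    exact_mod_cast (by lia : -α - β ≤ f * 2)
  rw [Phat, if_pos ⟨ceil_le, hf⟩, show (-α - β - (f : ℤ) - 1).toNat = g by lia]
  simp only [phiJ_eq_jacobiP_one_mul_normalizedJacobi, deriv_const_mul_field]
  rw [show max f (-α - β - (f : ℤ) - 1).toNat = f by lia,
    show max g (-α - β - (g : ℤ) - 1).toNat = f by lia, mul_sub]

theorem Phat_upper_as_limit_general (α β : ℤ) (M : ℕ → ℝ) (f : ℕ)
    (hf_lower : ⌈((-α - β : ℤ) : ℚ) / 2⌉ ≤ (f : ℤ)) (hf_upper : (f : ℤ) ≤ -α - 1)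
    (hf_reflect : (f : ℤ) ≤ -α - β - 1) (x : ℝ) :
    Tendsto
      (fun s : ℝ => s⁻¹ *
        (jacobiP ((α : ℝ) - s) (β : ℝ) f x -
          jacobiP ((α : ℝ) - s) (β : ℝ) f 1 /
              jacobiP ((α : ℝ) - s) (β : ℝ) ((-(f : ℤ) - α - β - 1).toNat) 1 *
            jacobiP ((α : ℝ) - s) (β : ℝ) ((-(f : ℤ) - α - β - 1).toNat) x))
      (𝓝[≠] 0) (𝓝 (Phat α β M f x)) := by
  set g := (-(f : ℤ) - α - β - 1).toNat
  have hfg : (f : ℤ) + g + α + β + 1 = 0 := by lia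
  have hgf : g < f := by
    rw [Int.ceil_le, div_le_iff₀ two_pos] at hf_lower
    have : -α - β ≤ f * 2 := mod_cast hf_lower
    lia
  have one_ne_zero_of_le {n : ℕ} (hn : n ≤ f) : jacobiP α β n 1 ≠ 0 :=
    jacobiP_one_ne_zero (mod_cast (by lia : α + n < 0))
  rw [Phat_eq_jacobiP_one_mul_deriv_sub_deriv M hfg hgf hf_upper]
  exact tendsto_inv_mul_jacobiP_sub_ratio_mul_jacobiP (mod_cast hfg) (one_ne_zero_of_le le_rfl)
    (one_ne_zero_of_le hgf.le) x

end UpperRange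

/-- `P̂_f^{α,β;M}` as a limit of combinations of Jacobi polynomials
(upper range). -/
theorem Phat_upper_as_limit
    (α β : ℤ) (M : ℕ → ℝ)
    (hαβ : α ≤ β) (hβ : β ≤ -1)
    (hM : ∀ i, M i ≠ 0 ∧ M i ≠ 1)
    (f : ℕ) (hf1 : ⌈((-α - β : ℤ) : ℚ) / 2⌉ ≤ (f : ℤ)) (hf2 : (f : ℤ) ≤ -α - 1) (x : ℝ) :
    Filter.Tendsto
      (fun s : ℝ => s⁻¹ *
        (jacobiP ((α : ℝ) - s) (β : ℝ) f x -
          jacobiP ((α : ℝ) - s) (β : ℝ) f 1 /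
              jacobiP ((α : ℝ) - s) (β : ℝ) ((-(f : ℤ) - α - β - 1).toNat) 1 *
            jacobiP ((α : ℝ) - s) (β : ℝ) ((-(f : ℤ) - α - β - 1).toNat) x))
      (nhdsWithin 0
        {s : ℝ | s ≠ 0 ∧ jacobiP ((α : ℝ) - s) (β : ℝ) ((-(f : ℤ) - α - β - 1).toNat) 1 ≠ 0})
      (nhds (Phat α β M f x)) :=
  (Phat_upper_as_limit_general α β M f hf1 hf2 (by lia) x).mono_left
    (nhdsWithin_mono 0 fun _ hs => hs.1)
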